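/- For every n ≥ 1, all λ_1, …, λ_n ∈ R, and every k with 2 ≤ k ≤ n, the modified weight λ̂_k can be rewritten with the first weight absorbed into a shift of the remaining ones: λ̂_k = Σ_{ℓ=2}^{k} C_{k,ℓ} · (λ_ℓ + ε_1 A^{(0)}_{ℓ,1} λ_1). -/

import Mathlib

/-!
The subsets `Q` of `{ℓ+1, …, k−1}` encode the increasing paths from `ℓ` to `k`. Splitting off the
first step `ℓ → j` of every path, where `j` is the least element of `Q`, or `k` if `Q` is empty,
gives the recurrence `C_{k,ℓ} = Σ_{ℓ<j≤k} ε_ℓ A^{(ℓ-1)}_{j,ℓ} C_{k,j}`. For `ℓ = 1` this expands the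
term `C_{k,1} λ₁` of `λ̂ₖ` into multiples of the other `C_{k,j}`.
-/

open Finset

/-- Product of adjacency factors along a path `ℓ → j₁ → ⋯ → jₚ → k`:
for each consecutive pair `(a, b)` in the list, a factor `A^{(a-1)}_{b,a}`. -/
def pathProd {R : Type*} [CommRing R] (A : ℕ → ℕ → ℕ → R) : List ℕ → R
  | [] => 1
  | [_] => 1
  | a :: b :: rest => A (a - 1) b a * pathProd A (b :: rest)

/-- The quantity `𝒜_{k,ℓ}(Q)` for a subset `Q = {j₁ < ⋯ < jₚ} ⊆ {ℓ+1,…,k−1}`. -/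
def calA {R : Type*} [CommRing R] (ε : ℕ → R) (A : ℕ → ℕ → ℕ → R)
    (k ℓ : ℕ) (Q : Finset ℕ) : R :=
  (ε ℓ * ∏ j ∈ Q, ε j) * pathProd A (ℓ :: ((Q.sort (· ≤ ·)) ++ [k]))

/-- The coefficients `C_{k,ℓ}`: `C_{k,k} = 1` and, for `k > ℓ`,
`C_{k,ℓ} = Σ_{Q ⊆ {ℓ+1,…,k−1}} 𝒜_{k,ℓ}(Q)`. -/
def Cgen {R : Type*} [CommRing R] (ε : ℕ → R) (A : ℕ → ℕ → ℕ → R) (k ℓ : ℕ) : R :=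
  if k = ℓ then 1 else ∑ Q ∈ (Finset.Ioo ℓ k).powerset, calA ε A k ℓ Q

/-- The modified weight `λ̂ₖ = Σ_{ℓ=1}^{k} C_{k,ℓ} λ_ℓ`. -/
def lamHat {R : Type*} [CommRing R] (ε : ℕ → R) (A : ℕ → ℕ → ℕ → R)
    (lam : ℕ → R) (k : ℕ) : R :=
  ∑ ℓ ∈ Finset.Icc 1 k, Cgen ε A k ℓ * lam ℓ

theorem sum_powerset_eq_add_sum_insert_min {α M : Type*} [LinearOrder α] [AddCommMonoid M]
    (s : Finset α) (f : Finset α → M) :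
    ∑ Q ∈ s.powerset, f Q = f ∅ + ∑ j ∈ s, ∑ Q ∈ {i ∈ s | j < i}.powerset, f (insert j Q) := by
  induction s using Finset.induction_on_min with
  | empty => simp
  | insert a s ha ih =>
    have ha_notMem : a ∉ s := fun h => lt_irrefl a (ha a h)
    have filter_a : {i ∈ insert a s | a < i} = s := by
      rw [filter_insert, if_neg (lt_irrefl a), filter_true_of_mem ha]
    have filter_j : ∀ j ∈ s, {i ∈ insert a s | j < i} = {i ∈ s | j < i} := fun j hj => by
      rw [filter_insert, if_neg (ha j hj).not_gt]
    rw [sum_powerset_insert ha_notMem, sum_insert ha_notMem, filter_a, ih, add_right_comm,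
      add_assoc]
    congr 2
    exact sum_congr rfl fun j hj => by rw [filter_j j hj]

theorem sum_powerset_Ioo_eq_add_sum_insert_min {α M : Type*} [LinearOrder α]
    [LocallyFiniteOrder α] [AddCommMonoid M] (a b : α) (f : Finset α → M) :
    ∑ Q ∈ (Ioo a b).powerset, f Q
      = f ∅ + ∑ j ∈ Ioo a b, ∑ Q ∈ (Ioo j b).powerset, f (insert j Q) := by
  have filter_Ioo : ∀ j ∈ Ioo a b, {i ∈ Ioo a b | j < i} = Ioo j b := by grind
  rw [sum_powerset_eq_add_sum_insert_min]
  congr 1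
  exact sum_congr rfl fun j hj => by rw [filter_Ioo j hj]

section Recurrence

variable {R : Type*} [CommRing R] (ε : ℕ → R) (A : ℕ → ℕ → ℕ → R)

theorem calA_empty (k ℓ : ℕ) : calA ε A k ℓ ∅ = ε ℓ * A (ℓ - 1) k ℓ := by
  simp [calA, pathProd]

theorem calA_insert_of_forall_lt (k ℓ : ℕ) {j : ℕ} {Q : Finset ℕ} (hQ : ∀ i ∈ Q, j < i) :
    calA ε A k ℓ (insert j Q) = ε ℓ * A (ℓ - 1) j ℓ * calA ε A k j Q := by
  have hj : j ∉ Q := fun h => lt_irrefl j (hQ j h)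
  rw [calA, calA, prod_insert hj, sort_insert _ (fun i hi => (hQ i hi).le) hj,
    List.cons_append, pathProd]
  ring

theorem Cgen_self (k : ℕ) : Cgen ε A k k = 1 :=
  if_pos rfl

theorem Cgen_of_ne {k ℓ : ℕ} (h : k ≠ ℓ) :
    Cgen ε A k ℓ = ∑ Q ∈ (Ioo ℓ k).powerset, calA ε A k ℓ Q :=
  if_neg h

theorem sum_powerset_calA_insert {k j : ℕ} (ℓ : ℕ) (hjk : j < k) :
    ∑ Q ∈ (Ioo j k).powerset, calA ε A k ℓ (insert j Q)
      = ε ℓ * A (ℓ - 1) j ℓ * Cgen ε A k j := by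
  rw [Cgen_of_ne ε A hjk.ne', mul_sum]
  exact sum_congr rfl fun Q hQ => calA_insert_of_forall_lt ε A k ℓ fun i hi =>
    (mem_Ioo.1 (mem_powerset.1 hQ hi)).1

theorem Cgen_eq_sum_Ioc {k ℓ : ℕ} (h : ℓ < k) :
    Cgen ε A k ℓ = ∑ j ∈ Ioc ℓ k, ε ℓ * A (ℓ - 1) j ℓ * Cgen ε A k j :=
  calc Cgen ε A k ℓ
    _ = calA ε A k ℓ ∅ + ∑ j ∈ Ioo ℓ k, ∑ Q ∈ (Ioo j k).powerset, calA ε A k ℓ (insert j Q) := by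
      rw [Cgen_of_ne ε A h.ne', sum_powerset_Ioo_eq_add_sum_insert_min]
    _ = ε ℓ * A (ℓ - 1) k ℓ * Cgen ε A k k
          + ∑ j ∈ Ioo ℓ k, ε ℓ * A (ℓ - 1) j ℓ * Cgen ε A k j := by
      rw [calA_empty, Cgen_self, mul_one]
      congr 1
      exact sum_congr rfl fun j hj => sum_powerset_calA_insert ε A ℓ (mem_Ioo.1 hj).2
    _ = ∑ j ∈ Ioc ℓ k, ε ℓ * A (ℓ - 1) j ℓ * Cgen ε A k j :=
      add_sum_Ioo_eq_sum_Ioc (f := fun j => ε ℓ * A (ℓ - 1) j ℓ * Cgen ε A k j) h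

end Recurrence

/-- For every `n ≥ 1`, all `λ₁, …, λₙ ∈ R`, and every `k` with `2 ≤ k ≤ n`,
`λ̂ₖ = Σ_{ℓ=2}^{k} C_{k,ℓ} · (λ_ℓ + ε₁ A^{(0)}_{ℓ,1} λ₁)`. -/
theorem lamHat_absorb_first {R : Type*} [CommRing R] (ε : ℕ → R) (A : ℕ → ℕ → ℕ → R)
    (n : ℕ) (hn : 1 ≤ n) (lam : ℕ → R) (k : ℕ) (h2 : 2 ≤ k) (hk : k ≤ n) :
    lamHat ε A lam k
      = ∑ ℓ ∈ Finset.Icc 2 k, Cgen ε A k ℓ * (lam ℓ + ε 1 * A 0 ℓ 1 * lam 1) := by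
  have Ioc_one : Ioc 1 k = Icc 2 k := (Icc_add_one_left_eq_Ioc 1 k).symm
  calc lamHat ε A lam k
    _ = Cgen ε A k 1 * lam 1 + ∑ ℓ ∈ Icc 2 k, Cgen ε A k ℓ * lam ℓ := by
      rw [lamHat, ← add_sum_Ioc_eq_sum_Icc (one_le_two.trans h2), Ioc_one]
    _ = (∑ ℓ ∈ Icc 2 k, ε 1 * A 0 ℓ 1 * Cgen ε A k ℓ) * lam 1
          + ∑ ℓ ∈ Icc 2 k, Cgen ε A k ℓ * lam ℓ := by
      rw [Cgen_eq_sum_Ioc ε A h2, Ioc_one]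
    _ = ∑ ℓ ∈ Icc 2 k, Cgen ε A k ℓ * (lam ℓ + ε 1 * A 0 ℓ 1 * lam 1) := by
      rw [sum_mul, ← sum_add_distrib]
      exact sum_congr rfl fun ℓ _ => by ring
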